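/- Let V be a finite set, f : 2^V → ℝ a monotone function with f(S) ≥ 0 for all S, a partition matroid constraint with d = Σ_i d_i and d̄ = min_i d_i, and OPT a feasible maximizer of f. Let X₀ = ∅ and X_{j+1} = X_j ∪ {v_j}, where v_j maximizes f(X_j∪{v}) over all v ∈ V∖X_j with X_j∪{v} feasible (a greedy chain). Then for every integer m with 0 ≤ m ≤ d̄ and every γ with 0 ≤ γ ≤ 1 that is a submodularity-ratio lower bound for f with parameters (m, d), the set X_m is feasible, has |X_m| ≤ m, and satisfies f(X_m) ≥ [1 − (1 − γ/d)^m]·f(OPT). -/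

import Mathlib

/-!
Every set of at most `d̄` elements is feasible, so during its first `d̄` steps the greedy chain
is not constrained at all: each step gains at least as much as adding any single new element.
Applying the submodularity ratio to `OPT \ X_j`, which has at most `d` elements, gives
`γ (f OPT - f X_j) ≤ d (f X_{j+1} - f X_j)`. Hence the gap `f OPT - f X_j` shrinks by a factor
`1 - γ / d` at every step.
-/

section SubmodularityRatio

variable {V : Type*} [DecidableEq V] {f : Finset V → ℝ} {X S : Finset V} {i d : ℕ} {γ g : ℝ}

/-- `γ` is a submodularity-ratio lower bound for `f` with parameters `(i, j)`: the total gain of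
adding the elements of a set `L` one at a time to `X` is at least `γ` times the gain of adding
them together, whenever `|X| < i` and `|L| ≤ j`. The range `0 ≤ γ ≤ 1` is not part of the
definition. -/
def IsSubmodularityRatioBound (f : Finset V → ℝ) (i j : ℕ) (γ : ℝ) : Prop :=
  ∀ X L : Finset V, Disjoint X L → X.card < i → L.card ≤ j →
    γ * (f (X ∪ L) - f X) ≤ ∑ v ∈ L, (f (insert v X) - f X)

theorem IsSubmodularityRatioBound.mul_sub_le_mul (hγ : IsSubmodularityRatioBound f i d γ)
    (hγ0 : 0 ≤ γ) (hf : Monotone f) (hX : X.card < i) (hS : S.card ≤ d) (hg0 : 0 ≤ g)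
    (hg : ∀ w ∉ X, f (insert w X) - f X ≤ g) :
    γ * (f S - f X) ≤ d * g := by
  have card_sdiff_le : (S \ X).card ≤ d := (Finset.card_le_card Finset.sdiff_subset).trans hS
  have le_union : f S ≤ f (X ∪ S \ X) := by
    rw [Finset.union_sdiff_self_eq_union]
    exact hf Finset.subset_union_right
  calc γ * (f S - f X)
      ≤ γ * (f (X ∪ S \ X) - f X) := by gcongr
    _ ≤ ∑ w ∈ S \ X, (f (insert w X) - f X) :=
        hγ X (S \ X) Finset.disjoint_sdiff hX card_sdiff_le
    _ ≤ (S \ X).card • g :=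
        Finset.sum_le_card_nsmul _ _ _ fun w hw => hg w (Finset.mem_sdiff.mp hw).2
    _ ≤ d * g := by
        rw [nsmul_eq_mul]
        gcongr

end SubmodularityRatio

section Greedy

variable {V : Type*} [DecidableEq V] {Feasible : Finset V → Prop} {f : Finset V → ℝ}
  {S : Finset V} {d m : ℕ} {γ : ℝ}

/-- `Y` arises from `X` by one greedy step: by adding a new element that maximizes `f` among all
new elements whose addition to `X` gives a feasible set. -/
def IsGreedyStep (Feasible : Finset V → Prop) (f : Finset V → ℝ) (X Y : Finset V) : Prop :=
  ∃ v ∉ X, Y = insert v X ∧ Feasible (insert v X) ∧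
    ∀ w ∉ X, Feasible (insert w X) → f (insert w X) ≤ f (insert v X)

namespace IsGreedyStep

variable {X Y : Finset V} {w : V}

theorem subset (h : IsGreedyStep Feasible f X Y) : X ⊆ Y := by
  obtain ⟨v, -, rfl, -⟩ := h
  exact Finset.subset_insert v X

theorem card_eq (h : IsGreedyStep Feasible f X Y) : Y.card = X.card + 1 := by
  obtain ⟨v, hv, rfl, -⟩ := h
  exact Finset.card_insert_of_notMem hv

theorem insert_le (h : IsGreedyStep Feasible f X Y) (hw : w ∉ X) (hwX : Feasible (insert w X)) :
    f (insert w X) ≤ f Y := by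
  obtain ⟨v, -, rfl, -, hmax⟩ := h
  exact hmax w hw hwX

theorem mul_sub_le_mul_sub (h : IsGreedyStep Feasible f X Y)
    (hfeas : ∀ w ∉ X, Feasible (insert w X)) (hf : Monotone f) (hγ0 : 0 ≤ γ)
    (hγ : IsSubmodularityRatioBound f m d γ) (hX : X.card < m) (hS : S.card ≤ d) :
    γ * (f S - f X) ≤ d * (f Y - f X) :=
  hγ.mul_sub_le_mul hγ0 hf hX hS (sub_nonneg.mpr (hf h.subset)) fun w hw =>
    sub_le_sub_right (h.insert_le hw (hfeas w hw)) (f X)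

theorem sub_le_one_sub_div_mul_sub (h : IsGreedyStep Feasible f X Y)
    (hfeas : ∀ w ∉ X, Feasible (insert w X)) (hf : Monotone f) (hγ0 : 0 ≤ γ)
    (hγ : IsSubmodularityRatioBound f m d γ) (hX : X.card < m) (hd : 0 < d) (hS : S.card ≤ d) :
    f S - f Y ≤ (1 - γ / d) * (f S - f X) := by
  have gain : γ / d * (f S - f X) ≤ f Y - f X := by
    rw [div_mul_eq_mul_div, div_le_iff₀' (Nat.cast_pos.mpr hd)]
    exact h.mul_sub_le_mul_sub hfeas hf hγ0 hγ hX hS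
  linarith

end IsGreedyStep

variable {X : ℕ → Finset V}

theorem card_eq_of_isGreedyStep (hX0 : X 0 = ∅)
    (hstep : ∀ j < m, IsGreedyStep Feasible f (X j) (X (j + 1))) {j : ℕ} (hj : j ≤ m) :
    (X j).card = j := by
  induction j with
  | zero => rw [hX0, Finset.card_empty]
  | succ j ih => rw [(hstep j hj).card_eq, ih (Nat.le_of_succ_le hj)]

theorem greedy_chain_monotone_general (hf0 : 0 ≤ f ∅) (hf : Monotone f)
    (hfeas : ∀ T : Finset V, T.card ≤ m → Feasible T) (hX0 : X 0 = ∅)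
    (hstep : ∀ j < m, IsGreedyStep Feasible f (X j) (X (j + 1)))
    (hd : 0 < d) (hS : S.card ≤ d) (hγ0 : 0 ≤ γ) (hγd : γ ≤ d)
    (hγ : IsSubmodularityRatioBound f m d γ) :
    Feasible (X m) ∧ (X m).card ≤ m ∧ (1 - (1 - γ / d) ^ m) * f S ≤ f (X m) := by
  have card_eq {j : ℕ} (hj : j ≤ m) : (X j).card = j := card_eq_of_isGreedyStep hX0 hstep hj
  have gap_succ_le (j : ℕ) (hj : j < m) :
      f S - f (X (j + 1)) ≤ (1 - γ / d) * (f S - f (X j)) := by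
    have hXj : (X j).card < m := (card_eq hj.le).trans_lt hj
    have insert_feasible (w : V) (_ : w ∉ X j) : Feasible (insert w (X j)) :=
      hfeas _ ((Finset.card_insert_le w (X j)).trans hXj)
    exact (hstep j hj).sub_le_one_sub_div_mul_sub insert_feasible hf hγ0 hγ hXj hd hS
  have ratio_nonneg : 0 ≤ 1 - γ / d := sub_nonneg.mpr (div_le_one_of_le₀ hγd d.cast_nonneg)
  have gap_le : f S - f (X m) ≤ (1 - γ / d) ^ m * f S :=
    calc f S - f (X m)
        ≤ (1 - γ / d) ^ m * (f S - f (X 0)) :=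
          le_geom (u := fun j => f S - f (X j)) ratio_nonneg m gap_succ_le
      _ ≤ (1 - γ / d) ^ m * f S := by
          rw [hX0]
          gcongr
          exact sub_le_self (f S) hf0
  have card_le : (X m).card ≤ m := (card_eq le_rfl).le
  exact ⟨hfeas _ card_le, card_le, by linarith⟩

end Greedy

section Capacities

variable {V ι : Type*} [DecidableEq V] {B : ι → Finset V} {D : ι → ℕ} {S : Finset V}

/-- Feasibility of `S` for the blocks `B i` with thresholds `D i`. The blocks may be any family
of sets; they form a partition in the case of a partition matroid. -/
def RespectsCapacities (B : ι → Finset V) (D : ι → ℕ) (S : Finset V) : Prop :=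
  ∀ i, (S ∩ B i).card ≤ D i

theorem respectsCapacities_of_card_le (hS : ∀ i, S.card ≤ D i) : RespectsCapacities B D S :=
  fun i => (Finset.card_le_card Finset.inter_subset_left).trans (hS i)

theorem RespectsCapacities.card_le_sum [Fintype ι] (hS : RespectsCapacities B D S)
    (hcover : ∀ v ∈ S, ∃ i, v ∈ B i) : S.card ≤ ∑ i, D i := by
  have subset_biUnion : S ⊆ Finset.univ.biUnion fun i => S ∩ B i := by
    intro v hv
    obtain ⟨i, hi⟩ := hcover v hv
    exact Finset.mem_biUnion.mpr ⟨i, Finset.mem_univ i, Finset.mem_inter.mpr ⟨hv, hi⟩⟩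
  calc S.card
      ≤ (Finset.univ.biUnion fun i => S ∩ B i).card := Finset.card_le_card subset_biUnion
    _ ≤ ∑ i, (S ∩ B i).card := Finset.card_biUnion_le
    _ ≤ ∑ i, D i := Finset.sum_le_sum fun i _ => hS i

end Capacities

/-- Approximation guarantee of the greedy chain for monotone `f` under a partition
matroid constraint: starting from `X₀ = ∅` and repeatedly adding a greedy element,
for every `m ≤ d̄` and every submodularity-ratio lower bound `γ ∈ [0,1]` with
parameters `(m, d)`, the set `X_m` is feasible, has `|X_m| ≤ m`, and satisfies
`f X_m ≥ [1-(1-γ/d)^m]·f OPT`. -/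
theorem greedy_chain_monotone {V : Type*} [Fintype V] [DecidableEq V] {k : ℕ}
    (hk : 0 < k)
    (B : Fin k → Finset V) (hpart : ∀ v : V, ∃! i, v ∈ B i)
    (hBne : ∀ i, (B i).Nonempty)
    (D : Fin k → ℕ) (hD : ∀ i, 1 ≤ D i ∧ D i ≤ (B i).card)
    (dbar : ℕ)
    (hdbar : dbar = Finset.univ.inf' ⟨⟨0, hk⟩, Finset.mem_univ _⟩ D)
    (f : Finset V → ℝ) (hf0 : ∀ S, 0 ≤ f S)
    (hmono : ∀ X Y : Finset V, X ⊆ Y → f X ≤ f Y)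
    (OPT : Finset V) (hOPTfeas : ∀ i, (OPT ∩ B i).card ≤ D i)
    (hOPTmax : ∀ S : Finset V, (∀ i, (S ∩ B i).card ≤ D i) → f S ≤ f OPT)
    (Xc : ℕ → Finset V) (hX0 : Xc 0 = ∅)
    (hstep : ∀ j < dbar, ∃ v ∉ Xc j,
      Xc (j + 1) = insert v (Xc j) ∧
      (∀ i, ((insert v (Xc j)) ∩ B i).card ≤ D i) ∧
      ∀ w ∉ Xc j, (∀ i, ((insert w (Xc j)) ∩ B i).card ≤ D i) →
        f (insert w (Xc j)) ≤ f (insert v (Xc j)))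
    (m : ℕ) (hm : m ≤ dbar)
    (γ : ℝ) (hγ0 : 0 ≤ γ) (hγ1 : γ ≤ 1)
    (hγ : ∀ S L : Finset V, Disjoint S L → S.card < m → L.card ≤ ∑ i, D i →
      γ * (f (S ∪ L) - f S) ≤ ∑ v ∈ L, (f (insert v S) - f S)) :
    (∀ i, ((Xc m) ∩ B i).card ≤ D i) ∧
    (Xc m).card ≤ m ∧
    f (Xc m) ≥ (1 - (1 - γ / (∑ i, D i : ℝ)) ^ m) * f OPT := by
  have m_le (i : Fin k) : m ≤ D i :=
    hm.trans (hdbar.trans_le (Finset.inf'_le D (Finset.mem_univ i)))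
  have sum_pos : 0 < ∑ i, D i :=
    Finset.sum_pos (fun i _ => (hD i).1) ⟨⟨0, hk⟩, Finset.mem_univ _⟩
  have card_OPT_le : OPT.card ≤ ∑ i, D i :=
    RespectsCapacities.card_le_sum hOPTfeas fun v _ => (hpart v).exists
  have γ_le : γ ≤ (∑ i, D i : ℕ) := hγ1.trans (Nat.one_le_cast.mpr sum_pos)
  exact_mod_cast greedy_chain_monotone_general (Feasible := RespectsCapacities B D)
    (hf0 ∅) hmono (fun T hT => respectsCapacities_of_card_le fun i => hT.trans (m_le i))
    hX0 (fun j hj => hstep j (hj.trans_le hm)) sum_pos card_OPT_le hγ0 γ_le hγ
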